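/- Let u₀ ∈ L¹(ℝⁿ; (1+|x|)dx) with M := ∫ u₀ and m_i := ∫ x_i u₀(x) dx. Then for any p ∈ [1,∞], t^{(n/2)(1−1/p)+1/2} ‖G(t)∗u₀ − M G(·,t) + m·∇G(·,t)‖_{L^p} → 0 as t → ∞. -/

import Mathlib

open Real MeasureTheory Filter ENNReal

/-- The `n`-dimensional heat kernel. -/
noncomputable def heatG (n : ℕ) (x : EuclideanSpace ℝ (Fin n)) (t : ℝ) : ℝ :=
  (4 * Real.pi * t) ^ (-(n : ℝ) / 2) * Real.exp (-‖x‖ ^ 2 / (4 * t))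

/-!
Write `R_t(x, y) = G_t(x - y) - G_t(x) + DG_t(x) y` for the remainder of the first-order Taylor
expansion of the heat kernel. The function to be estimated is `∫ R_t(x, y) u₀(y) dy`, and by scaling
`|R_t(x, y)| ≤ C ω(|y| / √t) (G_{2t}(x - y) + G_{2t}(x))` with `ω(r) = min(r, r²)`: the quadratic
bound is Taylor's formula, the linear one holds for each of the three terms when `|y| ≥ √t`.
As `G_{2t}` has integral one and supremum at most `t^{-n/2}`, interpolation between `L¹` and `L^∞`
bounds the `L^p` norm by `C t^{-(n/2)(1-1/p)} ∫ ω(|y| / √t) |u₀(y)| dy`. Finally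
`√t ω(|y| / √t) ≤ |y|` tends to zero pointwise, so dominated convergence gives the extra `t^{-1/2}`.
-/

section Interpolation

variable {α β F : Type*} [MeasurableSpace α] [MeasurableSpace β] {μ : Measure α} {ν : Measure β}
  [NormedAddCommGroup F] {p B : ℝ≥0∞}

lemma eLpNorm_le_lintegral_rpow_mul_rpow {f : α → F} (hf : AEStronglyMeasurable f μ)
    (hfB : ∀ x, ‖f x‖ₑ ≤ B) (hp : 1 ≤ p) :
    eLpNorm f p μ ≤ (∫⁻ x, ‖f x‖ₑ ∂μ) ^ (1 / p.toReal) * B ^ (1 - 1 / p.toReal) := by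
  rcases eq_or_ne p ∞ with rfl | hp_top
  · simpa using eLpNormEssSup_le_of_ae_enorm_bound (.of_forall hfB)
  set q := p.toReal
  have hq : 1 ≤ q := by simpa using ENNReal.toReal_mono hp_top hp
  have h_pow : ∫⁻ x, ‖f x‖ₑ ^ q ∂μ ≤ B ^ (q - 1) * ∫⁻ x, ‖f x‖ₑ ∂μ := by
    rw [← lintegral_const_mul'' _ hf.enorm]
    refine lintegral_mono fun x => ?_
    calc ‖f x‖ₑ ^ q = ‖f x‖ₑ ^ (q - 1) * ‖f x‖ₑ := by
          conv_rhs => rw [← ENNReal.rpow_one ‖f x‖ₑ, ← ENNReal.rpow_mul, one_mul,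
            ← ENNReal.rpow_add_of_nonneg _ _ (sub_nonneg.2 hq) zero_le_one, sub_add_cancel]
      _ ≤ B ^ (q - 1) * ‖f x‖ₑ := by gcongr; exact hfB x
  calc eLpNorm f p μ = (∫⁻ x, ‖f x‖ₑ ^ q ∂μ) ^ (1 / q) :=
        eLpNorm_eq_lintegral_rpow_enorm_toReal (one_pos.trans_le hp).ne' hp_top
    _ ≤ (B ^ (q - 1) * ∫⁻ x, ‖f x‖ₑ ∂μ) ^ (1 / q) := by gcongr
    _ = (∫⁻ x, ‖f x‖ₑ ∂μ) ^ (1 / q) * B ^ (1 - 1 / q) := by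
        rw [ENNReal.mul_rpow_of_nonneg _ _ (by positivity), ← ENNReal.rpow_mul, mul_comm]
        congr 2
        field_simp

/-- With `L¹` and `L^∞` bounds on the slices of the kernel in place of their `L^p` norms, this
substitutes for Minkowski's integral inequality. -/
lemma eLpNorm_integral_le_of_kernel_bounds [NormedSpace ℝ F] [SFinite μ] [SFinite ν]
    {H : α → β → F} {g : β → ℝ≥0∞}
    (hH : AEStronglyMeasurable (Function.uncurry H) (μ.prod ν)) (hB : B ≠ ∞)
    (h_sup : ∀ x y, ‖H x y‖ₑ ≤ B * g y) (h_int : ∀ y, ∫⁻ x, ‖H x y‖ₑ ∂μ ≤ g y) (hp : 1 ≤ p) :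
    eLpNorm (fun x => ∫ y, H x y ∂ν) p μ ≤ B ^ (1 - 1 / p.toReal) * ∫⁻ y, g y ∂ν := by
  set A := ∫⁻ y, g y ∂ν
  have h_enorm (x : α) : ‖∫ y, H x y ∂ν‖ₑ ≤ ∫⁻ y, ‖H x y‖ₑ ∂ν :=
    enorm_integral_le_lintegral_enorm _
  have h_bound (x : α) : ‖∫ y, H x y ∂ν‖ₑ ≤ B * A :=
    calc ‖∫ y, H x y ∂ν‖ₑ ≤ ∫⁻ y, B * g y ∂ν := (h_enorm x).trans (lintegral_mono (h_sup x))
      _ = B * A := lintegral_const_mul' _ _ hB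
  have h_lintegral : ∫⁻ x, ‖∫ y, H x y ∂ν‖ₑ ∂μ ≤ A :=
    calc ∫⁻ x, ‖∫ y, H x y ∂ν‖ₑ ∂μ ≤ ∫⁻ x, ∫⁻ y, ‖H x y‖ₑ ∂ν ∂μ := lintegral_mono h_enorm
      _ = ∫⁻ y, ∫⁻ x, ‖H x y‖ₑ ∂μ ∂ν := lintegral_lintegral_swap hH.enorm
      _ ≤ A := lintegral_mono h_int
  have h_inv : 1 / p.toReal ≤ 1 := by
    rcases eq_or_ne p ∞ with rfl | hp_top
    · simp
    · exact div_le_self zero_le_one (by simpa using ENNReal.toReal_mono hp_top hp)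
  calc eLpNorm (fun x => ∫ y, H x y ∂ν) p μ
      ≤ (∫⁻ x, ‖∫ y, H x y ∂ν‖ₑ ∂μ) ^ (1 / p.toReal) * (B * A) ^ (1 - 1 / p.toReal) :=
        eLpNorm_le_lintegral_rpow_mul_rpow hH.integral_prod_right' h_bound hp
    _ ≤ A ^ (1 / p.toReal) * (B * A) ^ (1 - 1 / p.toReal) := by gcongr
    _ = B ^ (1 - 1 / p.toReal) * A := by
        rw [ENNReal.mul_rpow_of_nonneg _ _ (sub_nonneg.2 h_inv), mul_left_comm,
          ← ENNReal.rpow_add_of_nonneg _ _ (by positivity) (sub_nonneg.2 h_inv),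
          add_sub_cancel, ENNReal.rpow_one]

end Interpolation

section FirstOrderRemainder

variable {E : Type*} [NormedAddCommGroup E] [NormedSpace ℝ E]
  {F : Type*} [NormedAddCommGroup F] [NormedSpace ℝ F]

/-- The remainder of the first-order Taylor expansion of `f` at `x`, evaluated at `x - y`. The
displacement is `-y` because `f (x - y)` is what appears under a convolution integral. -/
noncomputable def firstOrderRemainder (f : E → F) (x y : E) : F :=
  f (x - y) - f x + fderiv ℝ f x y

lemma firstOrderRemainder_const_smul_comp_smul (f : E → F) (a c : ℝ) (x y : E) :
    firstOrderRemainder (fun z => a • f (c • z)) x y =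
      a • firstOrderRemainder f (c • x) (c • y) := by
  have h_fderiv : fderiv ℝ (fun z => a • f (c • z)) x = a • c • fderiv ℝ f (c • x) := by
    rw [← fderiv_comp_smul]
    exact congrFun (fderiv_const_smul_field a) x
  simp [firstOrderRemainder, h_fderiv, smul_sub, smul_add]

lemma continuous_uncurry_firstOrderRemainder {f : E → F} (hf : ContDiff ℝ 1 f) :
    Continuous (Function.uncurry (firstOrderRemainder f)) := by
  have := hf.continuous
  have h_fderiv : Continuous fun z : E × E => fderiv ℝ f z.1 z.2 :=
    ((hf.continuous_fderiv one_ne_zero).comp continuous_fst).clm_apply continuous_snd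
  unfold Function.uncurry firstOrderRemainder
  fun_prop

variable [MeasurableSpace E] [OpensMeasurableSpace E] {μ : Measure E} {u : E → F}

lemma integrable_clm_smul_of_integrable_norm_mul_norm (L : E →L[ℝ] ℝ)
    (hu : AEStronglyMeasurable u μ) (hu₁ : Integrable (fun y => ‖y‖ * ‖u y‖) μ) :
    Integrable (fun y => L y • u y) μ := by
  refine (hu₁.const_mul ‖L‖).mono' (L.continuous.aestronglyMeasurable.smul hu) (.of_forall ?_)
  intro y
  rw [norm_smul, ← mul_assoc]
  gcongr
  exact L.le_opNorm y

lemma integral_firstOrderRemainder_smul {f : E → ℝ} {x : E}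
    (hfu : Integrable (fun y => f (x - y) • u y) μ) (hu : Integrable u μ)
    (hu₁ : Integrable (fun y => ‖y‖ * ‖u y‖) μ) :
    ∫ y, firstOrderRemainder f x y • u y ∂μ =
      (∫ y, f (x - y) • u y ∂μ) - f x • (∫ y, u y ∂μ) + ∫ y, fderiv ℝ f x y • u y ∂μ := by
  have h_mass : Integrable (fun y => f x • u y) μ := hu.smul (f x)
  have h_moment := integrable_clm_smul_of_integrable_norm_mul_norm (fderiv ℝ f x) hu.1 hu₁
  simp_rw [firstOrderRemainder, add_smul, sub_smul]
  rw [integral_add (by exact hfu.sub h_mass) h_moment, integral_sub hfu h_mass, integral_smul]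

end FirstOrderRemainder

section RemainderModulus

/-- The modulus `ω(r) = min(r, r²)` controlling the first-order Taylor remainder of a Gaussian:
quadratic for small displacements and linear for large ones. -/
noncomputable def remainderModulus (r : ℝ) : ℝ := min r (r ^ 2)

lemma remainderModulus_nonneg {r : ℝ} (hr : 0 ≤ r) : 0 ≤ remainderModulus r :=
  le_min hr (sq_nonneg r)

lemma continuous_remainderModulus : Continuous remainderModulus := by
  unfold remainderModulus
  fun_prop

lemma mul_remainderModulus_div_le {r s : ℝ} (hs : 0 < s) : s * remainderModulus (r / s) ≤ r :=
  calc s * remainderModulus (r / s) ≤ s * (r / s) := by gcongr; exact min_le_left _ _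
    _ = r := by field_simp

lemma mul_remainderModulus_div_le_sq_mul_inv {r s : ℝ} (hs : 0 < s) :
    s * remainderModulus (r / s) ≤ r ^ 2 * s⁻¹ :=
  calc s * remainderModulus (r / s) ≤ s * (r / s) ^ 2 := by gcongr; exact min_le_right _ _
    _ = r ^ 2 * s⁻¹ := by field_simp

lemma tendsto_mul_remainderModulus_div {r : ℝ} (hr : 0 ≤ r) :
    Tendsto (fun s => s * remainderModulus (r / s)) atTop (nhds 0) := by
  have h_inv : Tendsto (fun s : ℝ => r ^ 2 * s⁻¹) atTop (nhds 0) := by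
    simpa using tendsto_inv_atTop_zero.const_mul (r ^ 2)
  refine squeeze_zero' ?_ ?_ h_inv <;> filter_upwards [eventually_gt_atTop 0] with s hs
  · exact mul_nonneg hs.le (remainderModulus_nonneg (by positivity))
  · exact mul_remainderModulus_div_le_sq_mul_inv hs

lemma tendsto_lintegral_mul_remainderModulus_mul_norm {E F : Type*} [NormedAddCommGroup E]
    [MeasurableSpace E] [OpensMeasurableSpace E] [NormedAddCommGroup F] {μ : Measure E} {u : E → F}
    (hu : AEStronglyMeasurable u μ) (hu₁ : Integrable (fun y => ‖y‖ * ‖u y‖) μ) :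
    Tendsto (fun s => ∫⁻ y, ENNReal.ofReal (s * remainderModulus (‖y‖ / s) * ‖u y‖) ∂μ)
      atTop (nhds 0) := by
  have h_lim (y : E) : Tendsto (fun s => ENNReal.ofReal (s * remainderModulus (‖y‖ / s) * ‖u y‖))
      atTop (nhds 0) := by
    simpa using ENNReal.tendsto_ofReal
      ((tendsto_mul_remainderModulus_div (norm_nonneg y)).mul_const ‖u y‖)
  rw [← lintegral_zero (μ := μ)]
  refine tendsto_lintegral_filter_of_dominated_convergence'
    (fun y => ENNReal.ofReal (‖y‖ * ‖u y‖)) (.of_forall fun s => ?_) ?_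
    hu₁.lintegral_lt_top.ne (.of_forall h_lim)
  · have := continuous_remainderModulus
    have h_cont : Continuous fun y : E => s * remainderModulus (‖y‖ / s) := by fun_prop
    exact (h_cont.aemeasurable.mul hu.norm.aemeasurable).ennreal_ofReal
  · filter_upwards [eventually_gt_atTop 0] with s hs
    refine .of_forall fun y => ?_
    gcongr
    exact mul_remainderModulus_div_le hs

end RemainderModulus

section Gaussian

lemma abs_exp_sub_one_sub_self_le (s : ℝ) : |exp s - 1 - s| ≤ s ^ 2 * exp |s| := by
  have h := Complex.norm_exp_sub_sum_le_norm_mul_exp (s : ℂ) 2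
  have h_cast : Complex.exp s - ∑ i ∈ Finset.range 2, (s : ℂ) ^ i / i.factorial =
      ((exp s - 1 - s : ℝ) : ℂ) := by
    simp [Finset.sum_range_succ, sub_sub]
  simpa only [h_cast, Complex.norm_real, norm_eq_abs, sq_abs] using h

lemma abs_exp_sub_one_sub_self_le_of_abs_le_mul {r a s : ℝ} (hr : r ≤ 1) (ha : 0 ≤ a)
    (hs : |s| ≤ r * a) : |exp s - 1 - s| ≤ 2 * r ^ 2 * exp (2 * a) := by
  have hsa : |s| ≤ a := hs.trans (mul_le_of_le_one_left ha hr)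
  have h_sq : a ^ 2 ≤ 2 * exp a := by linarith [quadratic_le_exp_of_nonneg ha]
  calc |exp s - 1 - s| ≤ |s| ^ 2 * exp |s| := by
        rw [sq_abs]; exact abs_exp_sub_one_sub_self_le s
    _ ≤ (r * a) ^ 2 * exp a := by gcongr
    _ = r ^ 2 * a ^ 2 * exp a := by ring
    _ ≤ r ^ 2 * (2 * exp a) * exp a := by gcongr
    _ = 2 * r ^ 2 * exp (2 * a) := by rw [two_mul a, exp_add]; ring

variable {E : Type*} [NormedAddCommGroup E] [InnerProductSpace ℝ E]

lemma fderiv_gaussian (z w : E) :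
    fderiv ℝ (fun z : E => exp (-‖z‖ ^ 2 / 4)) z w = -(exp (-‖z‖ ^ 2 / 4) * (inner ℝ z w / 2)) := by
  have h : HasFDerivAt (fun z : E => -‖z‖ ^ 2 / 4) ((-1 / 4 : ℝ) • 2 • innerSL ℝ z) z :=
    ((hasStrictFDerivAt_norm_sq z).hasFDerivAt.const_mul (-1 / 4)).congr_of_eventuallyEq
      (.of_forall fun z => by ring)
  rw [h.exp.fderiv]
  simp
  ring

lemma firstOrderRemainder_gaussian (z w : E) :
    firstOrderRemainder (fun z : E => exp (-‖z‖ ^ 2 / 4)) z w =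
      exp (-‖z‖ ^ 2 / 4) * (exp (inner ℝ z w / 2 - ‖w‖ ^ 2 / 4) - 1 - inner ℝ z w / 2) := by
  have h_exp : exp (-‖z - w‖ ^ 2 / 4) =
      exp (-‖z‖ ^ 2 / 4) * exp (inner ℝ z w / 2 - ‖w‖ ^ 2 / 4) := by
    rw [← exp_add, norm_sub_sq_real]
    ring_nf
  rw [firstOrderRemainder, fderiv_gaussian, h_exp]
  ring

lemma abs_firstOrderRemainder_gaussian_le_of_norm_le_one {w : E} (hw : ‖w‖ ≤ 1) (z : E) :
    |firstOrderRemainder (fun z : E => exp (-‖z‖ ^ 2 / 4)) z w| ≤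
      3 * exp 3 * ‖w‖ ^ 2 * exp (-‖z‖ ^ 2 / 8) := by
  set s : ℝ := inner ℝ z w / 2 - ‖w‖ ^ 2 / 4
  set a : ℝ := ‖z‖ / 2 + 1 / 4
  have ha : 0 ≤ a := by positivity
  have hs : |s| ≤ ‖w‖ * a := by
    have h_inner := abs_le.1 (abs_real_inner_le_norm z w)
    have := norm_nonneg w
    exact abs_le.2 ⟨by simp only [s, a]; nlinarith, by simp only [s, a]; nlinarith⟩
  have h_taylor : |exp s - 1 - inner ℝ z w / 2| ≤ 3 * ‖w‖ ^ 2 * exp (2 * a) :=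
    calc |exp s - 1 - inner ℝ z w / 2| = |(exp s - 1 - s) - ‖w‖ ^ 2 / 4| := by
          simp only [s]; ring_nf
      _ ≤ |exp s - 1 - s| + ‖w‖ ^ 2 / 4 := by
          refine (abs_sub _ _).trans_eq ?_
          rw [abs_of_nonneg (by positivity : 0 ≤ ‖w‖ ^ 2 / 4)]
      _ ≤ 2 * ‖w‖ ^ 2 * exp (2 * a) + ‖w‖ ^ 2 * exp (2 * a) := by
          gcongr
          · exact abs_exp_sub_one_sub_self_le_of_abs_le_mul hw ha hs
          · nlinarith [one_le_exp (mul_nonneg zero_le_two ha), sq_nonneg ‖w‖]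
      _ = 3 * ‖w‖ ^ 2 * exp (2 * a) := by ring
  have h_gauss : exp (-‖z‖ ^ 2 / 4) * exp (2 * a) ≤ exp 3 * exp (-‖z‖ ^ 2 / 8) := by
    rw [← exp_add, ← exp_add, exp_le_exp]
    simp only [a]
    nlinarith [sq_nonneg (‖z‖ - 4)]
  rw [firstOrderRemainder_gaussian, abs_mul, abs_exp]
  calc exp (-‖z‖ ^ 2 / 4) * |exp s - 1 - inner ℝ z w / 2|
      ≤ exp (-‖z‖ ^ 2 / 4) * (3 * ‖w‖ ^ 2 * exp (2 * a)) := by gcongr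
    _ = 3 * ‖w‖ ^ 2 * (exp (-‖z‖ ^ 2 / 4) * exp (2 * a)) := by ring
    _ ≤ 3 * ‖w‖ ^ 2 * (exp 3 * exp (-‖z‖ ^ 2 / 8)) := by gcongr
    _ = 3 * exp 3 * ‖w‖ ^ 2 * exp (-‖z‖ ^ 2 / 8) := by ring

lemma abs_fderiv_gaussian_le (z w : E) :
    |fderiv ℝ (fun z : E => exp (-‖z‖ ^ 2 / 4)) z w| ≤ ‖w‖ * exp (-‖z‖ ^ 2 / 8) := by
  have h_half : ‖z‖ / 2 ≤ exp (‖z‖ ^ 2 / 8) := by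
    nlinarith [add_one_le_exp (‖z‖ ^ 2 / 8), sq_nonneg (‖z‖ - 2)]
  rw [fderiv_gaussian, abs_neg, abs_mul, abs_exp, abs_div, abs_two]
  calc exp (-‖z‖ ^ 2 / 4) * (|inner ℝ z w| / 2)
      ≤ exp (-‖z‖ ^ 2 / 4) * (‖z‖ * ‖w‖ / 2) := by gcongr; exact abs_real_inner_le_norm z w
    _ = ‖w‖ * (exp (-‖z‖ ^ 2 / 4) * (‖z‖ / 2)) := by ring
    _ ≤ ‖w‖ * (exp (-‖z‖ ^ 2 / 4) * exp (‖z‖ ^ 2 / 8)) := by gcongr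
    _ = ‖w‖ * exp (-‖z‖ ^ 2 / 8) := by rw [← exp_add]; ring_nf

lemma abs_firstOrderRemainder_gaussian_le_of_one_le_norm {w : E} (hw : 1 ≤ ‖w‖) (z : E) :
    |firstOrderRemainder (fun z : E => exp (-‖z‖ ^ 2 / 4)) z w| ≤
      2 * ‖w‖ * (exp (-‖z - w‖ ^ 2 / 8) + exp (-‖z‖ ^ 2 / 8)) := by
  have h_le (v : E) : exp (-‖v‖ ^ 2 / 4) ≤ exp (-‖v‖ ^ 2 / 8) :=
    exp_le_exp.2 (by nlinarith [sq_nonneg ‖v‖])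
  have h_fderiv := abs_fderiv_gaussian_le z w
  calc |exp (-‖z - w‖ ^ 2 / 4) - exp (-‖z‖ ^ 2 / 4) +
          fderiv ℝ (fun z : E => exp (-‖z‖ ^ 2 / 4)) z w|
      ≤ exp (-‖z - w‖ ^ 2 / 4) + exp (-‖z‖ ^ 2 / 4) + ‖w‖ * exp (-‖z‖ ^ 2 / 8) := by
        refine (abs_add_le _ _).trans (add_le_add ((abs_sub _ _).trans ?_) h_fderiv)
        rw [abs_exp, abs_exp]
    _ ≤ ‖w‖ * exp (-‖z - w‖ ^ 2 / 8) + ‖w‖ * exp (-‖z‖ ^ 2 / 8) + ‖w‖ * exp (-‖z‖ ^ 2 / 8) := by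
        gcongr <;> exact (h_le _).trans (le_mul_of_one_le_left (exp_nonneg _) hw)
    _ ≤ 2 * ‖w‖ * (exp (-‖z - w‖ ^ 2 / 8) + exp (-‖z‖ ^ 2 / 8)) := by
        nlinarith [mul_nonneg (norm_nonneg w) (exp_nonneg (-‖z - w‖ ^ 2 / 8))]

lemma abs_firstOrderRemainder_gaussian_le (z w : E) :
    |firstOrderRemainder (fun z : E => exp (-‖z‖ ^ 2 / 4)) z w| ≤
      3 * exp 3 * remainderModulus ‖w‖ * (exp (-‖z - w‖ ^ 2 / 8) + exp (-‖z‖ ^ 2 / 8)) := by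
  rcases le_total ‖w‖ 1 with hw | hw
  · rw [remainderModulus, min_eq_right (pow_le_of_le_one (norm_nonneg w) hw two_ne_zero)]
    refine (abs_firstOrderRemainder_gaussian_le_of_norm_le_one hw z).trans ?_
    gcongr
    exact le_add_of_nonneg_left (exp_nonneg _)
  · rw [remainderModulus, min_eq_left (le_self_pow₀ hw two_ne_zero)]
    refine (abs_firstOrderRemainder_gaussian_le_of_one_le_norm hw z).trans ?_
    gcongr
    linarith [one_le_exp (zero_le_three (α := ℝ))]

end Gaussian

section HeatKernel

open Module (finrank)

variable {E : Type*} [NormedAddCommGroup E] [InnerProductSpace ℝ E] {t : ℝ}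

/-- The heat kernel at time `t` on a finite-dimensional inner product space, the coordinate-free
form of `heatG`. -/
noncomputable def heatKernel (t : ℝ) (x : E) : ℝ :=
  (4 * π * t) ^ (-(finrank ℝ E : ℝ) / 2) * exp (-‖x‖ ^ 2 / (4 * t))

lemma heatKernel_nonneg (ht : 0 ≤ t) (x : E) : 0 ≤ heatKernel t x := by
  unfold heatKernel
  positivity

lemma contDiff_heatKernel : ContDiff ℝ 1 (heatKernel t : E → ℝ) := by
  unfold heatKernel
  have := contDiff_norm_sq ℝ (E := E) (n := 1)
  fun_prop

lemma heatKernel_le_rpow {s : ℝ} (hs : 0 < s) (hst : s ≤ t) (x : E) :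
    heatKernel t x ≤ s ^ (-(finrank ℝ E : ℝ) / 2) := by
  have ht : 0 < t := hs.trans_le hst
  have h_exp : exp (-‖x‖ ^ 2 / (4 * t)) ≤ 1 := by
    rw [neg_div, exp_le_one_iff]
    exact neg_nonpos.2 (by positivity)
  refine (mul_le_of_le_one_right (by positivity) h_exp).trans ?_
  refine rpow_le_rpow_of_nonpos hs (by nlinarith [pi_gt_three]) ?_
  rw [neg_div]
  exact neg_nonpos.2 (by positivity)

lemma heatKernel_eq_mul_gaussian (ht : 0 < t) (x : E) :
    heatKernel t x = (4 * π * t) ^ (-(finrank ℝ E : ℝ) / 2) * exp (-‖(√t)⁻¹ • x‖ ^ 2 / 4) := by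
  rw [heatKernel, norm_smul, mul_pow, norm_inv, norm_of_nonneg (sqrt_nonneg t), inv_pow,
    sq_sqrt ht.le]
  congr 2
  field_simp

lemma mul_gaussian_eq_heatKernel_two_mul (ht : 0 < t) (x : E) :
    (4 * π * t) ^ (-(finrank ℝ E : ℝ) / 2) * exp (-‖(√t)⁻¹ • x‖ ^ 2 / 8) =
      2 ^ ((finrank ℝ E : ℝ) / 2) * heatKernel (2 * t) x := by
  rw [heatKernel, norm_smul, mul_pow, norm_inv, norm_of_nonneg (sqrt_nonneg t), inv_pow,
    sq_sqrt ht.le, ← mul_assoc, show 4 * π * (2 * t) = 2 * (4 * π * t) by ring,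
    mul_rpow zero_le_two (by positivity), ← mul_assoc, ← rpow_add two_pos, neg_div,
    add_neg_cancel, Real.rpow_zero, one_mul]
  congr 2
  field_simp
  ring

lemma abs_firstOrderRemainder_heatKernel_le (ht : 0 < t) (x y : E) :
    |firstOrderRemainder (heatKernel t) x y| ≤
      3 * exp 3 * 2 ^ ((finrank ℝ E : ℝ) / 2) * remainderModulus (‖y‖ / √t) *
        (heatKernel (2 * t) (x - y) + heatKernel (2 * t) x) := by
  set c : ℝ := (4 * π * t) ^ (-(finrank ℝ E : ℝ) / 2)
  have hc : 0 ≤ c := by positivity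
  have h_scale : firstOrderRemainder (heatKernel t) x y =
      c * firstOrderRemainder (fun z : E => exp (-‖z‖ ^ 2 / 4)) ((√t)⁻¹ • x) ((√t)⁻¹ • y) := by
    rw [funext (heatKernel_eq_mul_gaussian (E := E) ht)]
    exact firstOrderRemainder_const_smul_comp_smul (fun z : E => exp (-‖z‖ ^ 2 / 4)) c _ x y
  have h_norm : ‖(√t)⁻¹ • y‖ = ‖y‖ / √t := by
    rw [norm_smul, norm_inv, norm_of_nonneg (sqrt_nonneg t), inv_mul_eq_div]
  rw [h_scale, abs_mul, abs_of_nonneg hc]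
  refine (mul_le_mul_of_nonneg_left (abs_firstOrderRemainder_gaussian_le _ _) hc).trans_eq ?_
  rw [← smul_sub, h_norm, mul_left_comm, mul_add, mul_gaussian_eq_heatKernel_two_mul ht,
    mul_gaussian_eq_heatKernel_two_mul ht]
  ring

lemma enorm_firstOrderRemainder_heatKernel_le (ht : 0 < t) (x y : E) :
    ‖firstOrderRemainder (heatKernel t) x y‖ₑ ≤
      ENNReal.ofReal (t ^ (-(finrank ℝ E : ℝ) / 2)) *
        ENNReal.ofReal (6 * exp 3 * 2 ^ ((finrank ℝ E : ℝ) / 2) * remainderModulus (‖y‖ / √t)) := by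
  have h_modulus : 0 ≤ remainderModulus (‖y‖ / √t) := remainderModulus_nonneg (by positivity)
  have h_kernel (v : E) : heatKernel (2 * t) v ≤ t ^ (-(finrank ℝ E : ℝ) / 2) :=
    heatKernel_le_rpow ht (by linarith) v
  rw [enorm_eq_ofReal_abs, ← ENNReal.ofReal_mul (by positivity)]
  refine ENNReal.ofReal_le_ofReal ((abs_firstOrderRemainder_heatKernel_le ht x y).trans ?_)
  refine (mul_le_mul_of_nonneg_left (add_le_add (h_kernel _) (h_kernel _)) ?_).trans_eq ?_
  · positivity
  · ring

variable [FiniteDimensional ℝ E] [MeasurableSpace E] [BorelSpace E]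

lemma integral_heatKernel (ht : 0 < t) : ∫ x : E, heatKernel t x = 1 := by
  have h_gauss (x : E) : exp (-‖x‖ ^ 2 / (4 * t)) = exp (-(1 / (4 * t)) * ‖x‖ ^ 2) := by
    congr 1
    ring
  simp_rw [heatKernel, h_gauss]
  rw [integral_const_mul, GaussianFourier.integral_rexp_neg_mul_sq_norm (by positivity), neg_div,
    div_div_eq_mul_div, div_one, mul_left_comm π 4 t, ← mul_assoc, ← rpow_add (by positivity),
    neg_add_cancel, Real.rpow_zero]

lemma lintegral_heatKernel (ht : 0 < t) : ∫⁻ x : E, ENNReal.ofReal (heatKernel t x) = 1 := by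
  rw [← ofReal_integral_eq_lintegral_ofReal
    (integrable_of_integral_eq_one (integral_heatKernel ht))
    (.of_forall (heatKernel_nonneg ht.le)), integral_heatKernel ht, ENNReal.ofReal_one]

lemma lintegral_enorm_firstOrderRemainder_heatKernel_le (ht : 0 < t) (y : E) :
    ∫⁻ x, ‖firstOrderRemainder (heatKernel t) x y‖ₑ ≤
      ENNReal.ofReal (6 * exp 3 * 2 ^ ((finrank ℝ E : ℝ) / 2) * remainderModulus (‖y‖ / √t)) := by
  set K : ℝ := 3 * exp 3 * 2 ^ ((finrank ℝ E : ℝ) / 2) * remainderModulus (‖y‖ / √t) with hK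
  have hK₀ : 0 ≤ K := mul_nonneg (by positivity) (remainderModulus_nonneg (by positivity))
  have h_nonneg (x : E) : 0 ≤ heatKernel (2 * t) x := heatKernel_nonneg (by positivity) x
  have h_meas : Measurable fun x : E => ENNReal.ofReal (heatKernel (2 * t) x) :=
    contDiff_heatKernel.continuous.measurable.ennreal_ofReal
  calc ∫⁻ x, ‖firstOrderRemainder (heatKernel t) x y‖ₑ
      ≤ ∫⁻ x, ENNReal.ofReal K * (ENNReal.ofReal (heatKernel (2 * t) (x - y)) +
          ENNReal.ofReal (heatKernel (2 * t) x)) := by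
        refine lintegral_mono fun x => ?_
        rw [← ENNReal.ofReal_add (h_nonneg _) (h_nonneg _), ← ENNReal.ofReal_mul hK₀,
          enorm_eq_ofReal_abs]
        exact ENNReal.ofReal_le_ofReal (abs_firstOrderRemainder_heatKernel_le ht x y)
    _ = ENNReal.ofReal K * (1 + 1) := by
        rw [lintegral_const_mul' _ _ ENNReal.ofReal_ne_top, lintegral_add_right _ h_meas,
          lintegral_sub_right_eq_self (fun x : E => ENNReal.ofReal (heatKernel (2 * t) x)) y,
          lintegral_heatKernel (by positivity)]
    _ = ENNReal.ofReal (6 * exp 3 * 2 ^ ((finrank ℝ E : ℝ) / 2) *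
          remainderModulus (‖y‖ / √t)) := by
        rw [one_add_one_eq_two, ← ENNReal.ofReal_ofNat, ← ENNReal.ofReal_mul hK₀, hK]
        ring_nf

variable {F : Type*} [NormedAddCommGroup F] [NormedSpace ℝ F] {u : E → F} {p : ℝ≥0∞}

lemma integrable_heatKernel_sub_smul (ht : 0 < t) (hu : Integrable u) (x : E) :
    Integrable fun y => heatKernel t (x - y) • u y := by
  have h_cont : Continuous fun y : E => heatKernel t (x - y) :=
    contDiff_heatKernel.continuous.comp (continuous_sub_left x)
  refine hu.bdd_smul (t ^ (-(finrank ℝ E : ℝ) / 2)) h_cont.aestronglyMeasurable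
    (.of_forall fun y => ?_)
  rw [norm_of_nonneg (heatKernel_nonneg ht.le _)]
  exact heatKernel_le_rpow ht le_rfl _

lemma eLpNorm_integral_firstOrderRemainder_heatKernel_smul_le (ht : 0 < t)
    (hu : AEStronglyMeasurable u) (hp : 1 ≤ p) :
    eLpNorm (fun x => ∫ y, firstOrderRemainder (heatKernel t) x y • u y) p volume ≤
      ENNReal.ofReal (t ^ (-(finrank ℝ E : ℝ) / 2)) ^ (1 - 1 / p.toReal) *
        ∫⁻ y, ENNReal.ofReal (6 * exp 3 * 2 ^ ((finrank ℝ E : ℝ) / 2) *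
          remainderModulus (‖y‖ / √t)) * ‖u y‖ₑ := by
  refine eLpNorm_integral_le_of_kernel_bounds ?_ ENNReal.ofReal_ne_top (fun x y => ?_)
    (fun y => ?_) hp
  · exact (continuous_uncurry_firstOrderRemainder contDiff_heatKernel).aestronglyMeasurable.smul
      hu.comp_snd
  · rw [enorm_smul, ← mul_assoc]
    gcongr
    exact enorm_firstOrderRemainder_heatKernel_le ht x y
  · simp_rw [enorm_smul]
    rw [lintegral_mul_const' _ _ enorm_ne_top]
    gcongr
    exact lintegral_enorm_firstOrderRemainder_heatKernel_le ht y

lemma ofReal_rpow_mul_eLpNorm_integral_firstOrderRemainder_heatKernel_smul_le (ht : 0 < t)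
    (hu : AEStronglyMeasurable u) (hp : 1 ≤ p) :
    ENNReal.ofReal (t ^ ((finrank ℝ E : ℝ) / 2 * (1 - 1 / p.toReal) + 1 / 2)) *
        eLpNorm (fun x => ∫ y, firstOrderRemainder (heatKernel t) x y • u y) p volume ≤
      ENNReal.ofReal (6 * exp 3 * 2 ^ ((finrank ℝ E : ℝ) / 2)) *
        ∫⁻ y, ENNReal.ofReal (√t * remainderModulus (‖y‖ / √t) * ‖u y‖) := by
  set d : ℝ := (finrank ℝ E : ℝ)
  set K : ℝ := 6 * exp 3 * 2 ^ (d / 2)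
  set θ : ℝ := 1 - 1 / p.toReal
  have h_exponent : t ^ (d / 2 * θ + 1 / 2) * (t ^ (-d / 2)) ^ θ = √t := by
    rw [← rpow_mul ht.le, ← rpow_add ht, sqrt_eq_rpow]
    ring_nf
  have h_density (y : E) : ENNReal.ofReal (√t) *
      (ENNReal.ofReal (K * remainderModulus (‖y‖ / √t)) * ‖u y‖ₑ) =
      ENNReal.ofReal K * ENNReal.ofReal (√t * remainderModulus (‖y‖ / √t) * ‖u y‖) := by
    have := remainderModulus_nonneg (r := ‖y‖ / √t) (by positivity)
    rw [← ofReal_norm, ← ENNReal.ofReal_mul (by positivity), ← ENNReal.ofReal_mul (by positivity),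
      ← ENNReal.ofReal_mul (by positivity)]
    ring_nf
  refine (mul_le_mul_right
    (eLpNorm_integral_firstOrderRemainder_heatKernel_smul_le ht hu hp) _).trans_eq ?_
  rw [ENNReal.ofReal_rpow_of_pos (by positivity), ← mul_assoc, ← ENNReal.ofReal_mul (by positivity),
    h_exponent, ← lintegral_const_mul' _ _ ENNReal.ofReal_ne_top,
    ← lintegral_const_mul' _ _ ENNReal.ofReal_ne_top]
  exact lintegral_congr h_density

/-- The last integral is `m · ∇G_t(x)`: for vector-valued `u` the first moment lies in `E ⊗ F`, so
it is kept under the integral sign. -/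
theorem heat_semigroup_second_order_asymptotics_general [CompleteSpace F] (hu : Integrable u)
    (hu₁ : Integrable fun y => ‖y‖ * ‖u y‖) (hp : 1 ≤ p) :
    Tendsto (fun t : ℝ =>
        ENNReal.ofReal (t ^ ((finrank ℝ E : ℝ) / 2 * (1 - 1 / p.toReal) + 1 / 2)) *
          eLpNorm (fun x => (∫ y, heatKernel t (x - y) • u y) - heatKernel t x • (∫ y, u y) +
            ∫ y, fderiv ℝ (heatKernel t) x y • u y) p volume)
      atTop (nhds 0) := by
  have h_lim := ENNReal.Tendsto.const_mul
    (a := ENNReal.ofReal (6 * exp 3 * 2 ^ ((finrank ℝ E : ℝ) / 2)))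
    ((tendsto_lintegral_mul_remainderModulus_mul_norm hu.1 hu₁).comp tendsto_sqrt_atTop)
    (.inr ENNReal.ofReal_ne_top)
  rw [mul_zero] at h_lim
  refine tendsto_of_tendsto_of_tendsto_of_le_of_le' tendsto_const_nhds h_lim
    (.of_forall fun _ => zero_le) ?_
  filter_upwards [eventually_gt_atTop 0] with t ht
  simp_rw [← integral_firstOrderRemainder_smul (integrable_heatKernel_sub_smul ht hu _) hu hu₁]
  exact ofReal_rpow_mul_eLpNorm_integral_firstOrderRemainder_heatKernel_smul_le ht hu.1 hp

end HeatKernel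

lemma heatG_eq_heatKernel (n : ℕ) (x : EuclideanSpace ℝ (Fin n)) (t : ℝ) :
    heatG n x t = heatKernel t x := by
  simp [heatG, heatKernel]

lemma sum_integral_coord_mul_clm_single {ι : Type*} [Fintype ι] [DecidableEq ι]
    {μ : Measure (EuclideanSpace ℝ ι)} {u : EuclideanSpace ℝ ι → ℝ}
    (hu : AEStronglyMeasurable u μ) (hu₁ : Integrable (fun y => ‖y‖ * ‖u y‖) μ)
    (L : EuclideanSpace ℝ ι →L[ℝ] ℝ) :
    ∑ i, (∫ y, y i * u y ∂μ) * L (EuclideanSpace.single i 1) = ∫ y, L y * u y ∂μ := by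
  have h_expand (y : EuclideanSpace ℝ ι) :
      L y * u y = ∑ i, y i * u y * L (EuclideanSpace.single i 1) := by
    have h_sum := congrArg L ((EuclideanSpace.basisFun ι ℝ).sum_repr y)
    simp only [map_sum, map_smul, EuclideanSpace.basisFun_repr, EuclideanSpace.basisFun_apply,
      smul_eq_mul] at h_sum
    simp only [← h_sum, Finset.sum_mul, mul_right_comm]
  have h_coord (i : ι) : Integrable (fun y : EuclideanSpace ℝ ι => y i * u y) μ :=
    integrable_clm_smul_of_integrable_norm_mul_norm (EuclideanSpace.proj i) hu hu₁
  simp_rw [h_expand]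
  rw [integral_finsetSum _ fun i _ => (h_coord i).mul_const _]
  simp_rw [integral_mul_const]

lemma tendsto_mul_toReal_of_tendsto_ofReal_mul {α : Type*} {l : Filter α} {a : α → ℝ}
    {b : α → ℝ≥0∞} (ha : ∀ᶠ t in l, 0 ≤ a t)
    (h : Tendsto (fun t => ENNReal.ofReal (a t) * b t) l (nhds 0)) :
    Tendsto (fun t => a t * (b t).toReal) l (nhds 0) := by
  refine ((ENNReal.tendsto_toReal ENNReal.zero_ne_top).comp h).congr' ?_
  filter_upwards [ha] with t hat
  simp [hat]

/-- Second-order asymptotic expansion of solutions of the heat equation: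
if `u₀ ∈ L¹(ℝⁿ; (1+|x|)dx)`, then for every `p ∈ [1,∞]`,
`t^{(n/2)(1-1/p)+1/2} ‖G(t)∗u₀ - M G(t) + m·∇G(t)‖_{L^p} → 0` as `t → ∞`. -/
theorem heat_semigroup_second_order_asymptotics (n : ℕ) (hn : 1 ≤ n)
    (u₀ : EuclideanSpace ℝ (Fin n) → ℝ)
    (hu₀ : Integrable u₀)
    (hu₀w : Integrable (fun x : EuclideanSpace ℝ (Fin n) => (1 + ‖x‖) * |u₀ x|))
    (p : ℝ≥0∞) (hp : 1 ≤ p)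
    (M : ℝ) (hM : M = ∫ x, u₀ x)
    (m : Fin n → ℝ) (hm : ∀ i, m i = ∫ x : EuclideanSpace ℝ (Fin n), x i * u₀ x) :
    Tendsto (fun t : ℝ =>
        t ^ ((n : ℝ) / 2 * (1 - 1 / p.toReal) + 1 / 2) *
          (eLpNorm (fun x : EuclideanSpace ℝ (Fin n) =>
              (∫ y, heatG n (x - y) t * u₀ y) - M * heatG n x t +
                ∑ i, m i * fderiv ℝ (fun z => heatG n z t) x (EuclideanSpace.single i 1))
            p volume).toReal)
      atTop (nhds 0) := by
  have hu₁ : Integrable fun y : EuclideanSpace ℝ (Fin n) => ‖y‖ * ‖u₀ y‖ := by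
    simpa [add_mul, Pi.sub_def] using hu₀w.sub hu₀.abs
  have h := heat_semigroup_second_order_asymptotics_general hu₀ hu₁ hp
  simp_rw [heatG_eq_heatKernel, hM, hm, sum_integral_coord_mul_clm_single hu₀.1 hu₁]
  refine tendsto_mul_toReal_of_tendsto_ofReal_mul ?_ ?_
  · filter_upwards [eventually_ge_atTop 0] with t ht using rpow_nonneg ht _
  · simpa [mul_comm] using h
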